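/- Every r-uniform hypergraph containing no odd cycle admits a strong vertex coloring with r colors, i.e., a partition of its vertex set into r classes such that every edge meets each class in at most one vertex. -/

import Mathlib

/-- The hypergraph with edge set `E` contains an odd cycle: a cyclic
sequence of `k ≥ 3` (`k` odd) distinct vertices and distinct edges with
`{xᵢ, xᵢ₊₁} ⊆ eᵢ` for all `i` (indices cyclic). -/
def HasOddCycle {V : Type*} (E : Finset (Finset V)) : Prop :=
  ∃ (k : ℕ) (x : Fin k → V) (e : Fin k → Finset V),
    3 ≤ k ∧ Odd k ∧ Function.Injective x ∧ Function.Injective e ∧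
    (∀ i, e i ∈ E) ∧ ∀ i, x i ∈ e i ∧ x (finRotate k i) ∈ e i

/-!
Choose a coloring maximizing the total number of colors seen by the edges, each edge counting its
own colors. If it is not strong, some edge `e` repeats a color `i` and hence misses a color `j`.
Let `W` be the set of vertices colored `i` or `j`, and pick two vertices of `W` in every edge that
has them. A cycle of the graph formed by these pairs lifts to a cycle of the hypergraph, so the
graph is bipartite. Recolor `W` by `i` and `j` along a bipartition. An edge with two vertices in `W`
now sees both colors; on any other edge, the recoloring acts as a permutation of the colors. So no
edge loses colors, and `e` gains `j`, contradicting maximality.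
-/

section EvenCycles

variable {V : Type*} {G : SimpleGraph V}

-- When prepending an edge closes a cycle, the cycle is even, so cutting it off keeps the parity.
lemma exists_isPath_even_length_iff
    (hG : ∀ ⦃v⦄ (c : G.Walk v v), c.IsCycle → Even c.length) {u v : V} (p : G.Walk u v) :
    ∃ q : G.Walk u v, q.IsPath ∧ (Even q.length ↔ Even p.length) := by
  classical
  induction p with
  | nil => exact ⟨.nil, .nil, Iff.rfl⟩
  | @cons u w v huw p ih =>
    obtain ⟨q, hq, hparity⟩ := ih
    by_cases hu : u ∈ q.support
    · let c := SimpleGraph.Walk.cons huw (q.takeUntil u hu)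
      have hlen : (q.takeUntil u hu).length + (q.dropUntil u hu).length = q.length := by
        rw [← SimpleGraph.Walk.length_append, q.take_spec hu]
      have hpos : (q.takeUntil u hu).length ≠ 0 := fun h =>
        huw.ne' (SimpleGraph.Walk.eq_of_length_eq_zero h)
      have hc : Even c.length := by
        by_contra hodd
        have hcycle : c.IsCycle := by
          refine SimpleGraph.Walk.isCycle_iff_isPath_tail_and_le_length.2 ⟨?_, ?_⟩
          · simpa [c] using hq.takeUntil hu
          · simp only [c, SimpleGraph.Walk.length_cons] at hodd ⊢
            grind
        exact hodd (hG c hcycle)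
      refine ⟨q.dropUntil u hu, hq.dropUntil hu, ?_⟩
      simp only [c, SimpleGraph.Walk.length_cons] at hc ⊢
      grind
    · refine ⟨.cons huw q, hq.cons hu, ?_⟩
      simp only [SimpleGraph.Walk.length_cons, Nat.even_add_one, hparity]

lemma colorable_two_of_forall_isCycle_even
    (hG : ∀ ⦃v⦄ (c : G.Walk v v), c.IsCycle → Even c.length) : G.Colorable 2 := by
  refine SimpleGraph.two_colorable_iff_forall_loop_even.2 fun u w => ?_
  obtain ⟨q, hq, hparity⟩ := exists_isPath_even_length_iff hG w
  rw [← hparity, SimpleGraph.Walk.length_eq_zero_iff.2 (SimpleGraph.Walk.isPath_iff_nil.1 hq)]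
  exact Even.zero

lemma getVert_finRotate {u : V} (w : G.Walk u u) (i : Fin w.length) :
    w.getVert (finRotate w.length i) = w.getVert (i + 1) := by
  have hval : (finRotate w.length i : ℕ) = (i + 1) % w.length := by
    have := i.neZero
    rw [finRotate_apply, Fin.val_add, Fin.val_one', Nat.add_mod_mod]
  rw [hval]
  rcases (Nat.add_one_le_of_lt i.2).lt_or_eq with hlt | hlast
  · rw [Nat.mod_eq_of_lt hlt]
  · rw [hlast, Nat.mod_self, w.getVert_zero, w.getVert_length]

end EvenCycles

section BergeCopies

variable {V : Type*}

/-- The map `φ` exhibits a Berge copy of the graph `G` in the hypergraph `E`: it sends distinct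
edges of `G` to distinct hyperedges, each containing both ends of the edge it comes from. The values
of `φ` outside `G.edgeSet` are irrelevant. -/
structure IsBergeCopy (G : SimpleGraph V) (E : Finset (Finset V)) (φ : Sym2 V → Finset V) :
    Prop where
  mapsTo : Set.MapsTo φ G.edgeSet E
  injOn : Set.InjOn φ G.edgeSet
  mem : ∀ z ∈ G.edgeSet, ∀ v ∈ z, v ∈ φ z

variable {G : SimpleGraph V} {E : Finset (Finset V)} {φ : Sym2 V → Finset V}

lemma IsBergeCopy.hasOddCycle (hφ : IsBergeCopy G E φ) {u : V} {c : G.Walk u u}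
    (hc : c.IsCycle) (hodd : Odd c.length) : HasOddCycle E := by
  let edge (i : Fin c.length) : Sym2 V := s(c.getVert i, c.getVert (i + 1))
  have hedge (i : Fin c.length) : edge i ∈ G.edgeSet := c.adj_getVert_succ i.2
  have hedge_inj : Function.Injective edge := by
    intro i j hij
    have hi : (i : ℕ) < c.edges.length := by simp
    have hj : (j : ℕ) < c.edges.length := by simp
    refine Fin.ext ((hc.edges_nodup.getElem_inj_iff (hi := hi) (hj := hj)).1 ?_)
    rw [SimpleGraph.Walk.getElem_edges, SimpleGraph.Walk.getElem_edges]
    exact hij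
  refine ⟨c.length, fun i => c.getVert i, fun i => φ (edge i), hc.three_le_length, hodd,
    fun i j hij => Fin.ext (hc.getVert_injOn' ?_ ?_ hij),
    fun i j hij => hedge_inj (hφ.injOn (hedge i) (hedge j) hij),
    fun i => hφ.mapsTo (hedge i), fun i => ⟨?_, ?_⟩⟩
  · exact Nat.le_sub_one_of_lt i.2
  · exact Nat.le_sub_one_of_lt j.2
  · exact hφ.mem _ (hedge i) _ (Sym2.mem_mk_left _ _)
  · beta_reduce
    rw [getVert_finRotate]
    exact hφ.mem _ (hedge i) _ (Sym2.mem_mk_right _ _)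

lemma IsBergeCopy.colorable_two (hφ : IsBergeCopy G E φ) (hodd : ¬ HasOddCycle E) :
    G.Colorable 2 :=
  colorable_two_of_forall_isCycle_even fun _ _ hc =>
    Nat.not_odd_iff_even.1 fun h => hodd (hφ.hasOddCycle hc h)

lemma isBergeCopy_invFunOn {F : Set (Finset V)} (hF : F ⊆ E) {p : Finset V → Sym2 V}
    (hp : ∀ e ∈ F, ∀ v ∈ p e, v ∈ e) :
    IsBergeCopy (SimpleGraph.fromEdgeSet (p '' F)) E (Function.invFunOn p F) := by
  have hsub : (SimpleGraph.fromEdgeSet (p '' F)).edgeSet ⊆ p '' F := by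
    rw [SimpleGraph.edgeSet_fromEdgeSet]
    exact Set.sdiff_subset
  refine ⟨fun z hz => hF (Function.invFunOn_mem (hsub hz)),
    (Function.invFunOn_injOn_image p F).mono hsub, fun z hz v hv => ?_⟩
  refine hp _ (Function.invFunOn_mem (hsub hz)) v ?_
  rwa [Function.invFunOn_eq (hsub hz)]

lemma exists_bool_coloring_surjOn_inter (hodd : ¬ HasOddCycle E) (W : Set V) :
    ∃ d : V → Bool, ∀ e ∈ E, ((e : Set V) ∩ W).Nontrivial → Set.SurjOn d (e ∩ W) Set.univ := by
  let F : Set (Finset V) := {e | e ∈ E ∧ ((e : Set V) ∩ W).Nontrivial}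
  have hpair : ∀ e ∈ F, ∃ a ∈ (e : Set V) ∩ W, ∃ b ∈ (e : Set V) ∩ W, a ≠ b := fun e he => he.2
  cases isEmpty_or_nonempty V
  · exact ⟨fun _ => true, fun e _ he => isEmptyElim he.nonempty.some⟩
  choose! a ha b hb hab using hpair
  have hcopy := isBergeCopy_invFunOn (F := F) (p := fun e => s(a e, b e))
    (fun e he => he.1) (by
      intro e he v hv
      rcases Sym2.mem_iff.1 hv with rfl | rfl
      exacts [(ha e he).1, (hb e he).1])
  let d : SimpleGraph.Coloring _ Bool :=
    (hcopy.colorable_two hodd).toColoring Fintype.card_bool.ge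
  refine ⟨d, fun e heE he => ?_⟩
  have heF : e ∈ F := ⟨heE, he⟩
  have hne : d (a e) ≠ d (b e) :=
    d.valid (SimpleGraph.fromEdgeSet_adj _ |>.2 ⟨⟨e, heF, rfl⟩, hab e heF⟩)
  intro t _
  by_cases hta : d (a e) = t
  · exact ⟨a e, ha e heF, hta⟩
  · exact ⟨b e, hb e heF, by
      rw [Bool.eq_not_of_ne hne.symm, Bool.eq_not_of_ne hta, Bool.not_not]⟩

end BergeCopies

section Recoloring

variable {V α : Type*} [DecidableEq α]

/-- The coloring obtained from `c` by redistributing the color classes `i` and `j` according to `d`: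
their vertices get `i` where `d` is `true` and `j` where it is `false`. -/
def recolor (c : V → α) (i j : α) (d : V → Bool) (v : V) : α :=
  if c v = i ∨ c v = j then (if d v then i else j) else c v

variable {c : V → α} {i j : α} {d : V → Bool} {e : Finset V} {v : V}

lemma recolor_of_mem (hv : v ∈ c ⁻¹' {i, j}) : recolor c i j d v = if d v then i else j :=
  if_pos hv

lemma recolor_of_notMem (hv : v ∉ c ⁻¹' {i, j}) : recolor c i j d v = c v :=
  if_neg hv

lemma insert_insert_image_subset_image_recolor
    (hd : Set.SurjOn d (e ∩ c ⁻¹' {i, j}) Set.univ) :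
    insert i (insert j (e.image c)) ⊆ e.image (recolor c i j d) := by
  have hi : i ∈ e.image (recolor c i j d) := by
    obtain ⟨v, ⟨hve, hv⟩, hdv⟩ := hd (Set.mem_univ true)
    exact Finset.mem_image.2 ⟨v, hve, by rw [recolor_of_mem hv, hdv, if_pos rfl]⟩
  have hj : j ∈ e.image (recolor c i j d) := by
    obtain ⟨v, ⟨hve, hv⟩, hdv⟩ := hd (Set.mem_univ false)
    exact Finset.mem_image.2 ⟨v, hve, by rw [recolor_of_mem hv, hdv, if_neg Bool.false_ne_true]⟩
  refine Finset.insert_subset hi (Finset.insert_subset hj (Finset.image_subset_iff.2 ?_))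
  intro v hve
  by_cases hv : v ∈ c ⁻¹' {i, j}
  · rcases hv with hv | hv <;> rwa [hv]
  · rw [← recolor_of_notMem (d := d) hv]
    exact Finset.mem_image_of_mem _ hve

lemma exists_perm_eqOn_recolor (h : ((e : Set V) ∩ c ⁻¹' {i, j}).Subsingleton) :
    ∃ σ : Equiv.Perm α, Set.EqOn (recolor c i j d) (σ ∘ c) e := by
  by_cases hfix : Set.EqOn (recolor c i j d) c e
  · exact ⟨1, hfix⟩
  obtain ⟨w, hwe, hw⟩ : ∃ w ∈ (e : Set V), recolor c i j d w ≠ c w := by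
    simpa only [Set.EqOn, not_forall, exists_prop] using hfix
  have hwW : w ∈ c ⁻¹' {i, j} := by
    by_contra hwW
    exact hw (recolor_of_notMem hwW)
  refine ⟨Equiv.swap i j, fun v hve => ?_⟩
  by_cases hv : v ∈ c ⁻¹' {i, j}
  · obtain rfl := h ⟨hve, hv⟩ ⟨hwe, hwW⟩
    rw [recolor_of_mem hv] at hw ⊢
    rcases hv with hv | hv <;> rw [Function.comp_apply, hv] <;> rw [hv] at hw
    · rw [Equiv.swap_apply_left]
      exact (ite_eq_or_eq _ i j).resolve_left hw
    · rw [Equiv.swap_apply_right]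
      exact (ite_eq_or_eq _ i j).resolve_right hw
  · have hvij : c v ≠ i ∧ c v ≠ j := not_or.1 hv
    rw [recolor_of_notMem hv, Function.comp_apply, Equiv.swap_apply_of_ne_of_ne hvij.1 hvij.2]

lemma card_image_le_card_image_recolor
    (hd : ((e : Set V) ∩ c ⁻¹' {i, j}).Nontrivial → Set.SurjOn d (e ∩ c ⁻¹' {i, j}) Set.univ) :
    (e.image c).card ≤ (e.image (recolor c i j d)).card := by
  rcases Set.subsingleton_or_nontrivial ((e : Set V) ∩ c ⁻¹' {i, j}) with h | h
  · obtain ⟨σ, hσ⟩ := exists_perm_eqOn_recolor (d := d) h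
    rw [Finset.image_congr hσ, ← Finset.image_image, Finset.card_image_of_injective _ σ.injective]
  · refine Finset.card_le_card fun k hk => insert_insert_image_subset_image_recolor (hd h) ?_
    exact Finset.mem_insert_of_mem (Finset.mem_insert_of_mem hk)

end Recoloring

section StrongColoring

variable {V α : Type*} [DecidableEq α]

/-- The number of pairs `(e, k)` such that the color `k` appears in the edge `e` under the coloring
`c`. Strong colorings are those for which it attains the upper bound `∑ e ∈ E, e.card`. -/
def incidentColorCount (E : Finset (Finset V)) (c : V → α) : ℕ :=
  ∑ e ∈ E, (e.image c).card

lemma exists_incidentColorCount_max [Nonempty α] (E : Finset (Finset V)) :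
    ∃ c : V → α, ∀ c' : V → α, incidentColorCount E c' ≤ incidentColorCount E c := by
  have hbdd : BddAbove (Set.range (incidentColorCount (α := α) E)) :=
    ⟨∑ e ∈ E, e.card, Set.forall_mem_range.2 fun c =>
      Finset.sum_le_sum fun _ _ => Finset.card_image_le⟩
  obtain ⟨c, hc⟩ := Nat.sSup_mem (Set.range_nonempty (incidentColorCount E)) hbdd
  exact ⟨c, fun c' => hc ▸ le_csSup hbdd (Set.mem_range_self c')⟩

lemma exists_incidentColorCount_lt [Fintype α] {E : Finset (Finset V)} (hodd : ¬ HasOddCycle E)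
    {e : Finset V} (he : e ∈ E) (hcard : e.card ≤ Fintype.card α) {c : V → α}
    (hc : ¬ Set.InjOn c (e : Set V)) :
    ∃ c' : V → α, incidentColorCount E c < incidentColorCount E c' := by
  obtain ⟨x, hx, y, hy, hxy, hne⟩ : ∃ x ∈ e, ∃ y ∈ e, c x = c y ∧ x ≠ y := by
    simpa only [Set.InjOn, not_forall, exists_prop, Finset.mem_coe] using hc
  obtain ⟨j, hj⟩ : ∃ j, j ∉ e.image c := by
    have hlt : (e.image c).card < Fintype.card α :=
      (Finset.card_image_le.lt_of_ne (mt Finset.card_image_iff.1 hc)).trans_le hcard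
    simpa using Finset.exists_mem_notMem_of_card_lt_card hlt
  obtain ⟨d, hd⟩ := exists_bool_coloring_surjOn_inter hodd (c ⁻¹' {c x, j})
  have hsurj := hd e he ⟨x, ⟨hx, Or.inl rfl⟩, y, ⟨hy, Or.inl hxy.symm⟩, hne⟩
  refine ⟨recolor c (c x) j d, Finset.sum_lt_sum
    (fun f hf => card_image_le_card_image_recolor (hd f hf)) ⟨e, he, ?_⟩⟩
  calc (e.image c).card < (insert j (e.image c)).card := by
        rw [Finset.card_insert_of_notMem hj]
        exact Nat.lt_succ_self _
    _ ≤ (e.image (recolor c (c x) j d)).card := Finset.card_le_card <|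
        (Finset.subset_insert _ _).trans (insert_insert_image_subset_image_recolor hsurj)

end StrongColoring

theorem stmt17_general {V α : Type*} [Fintype α] [Nonempty α] (E : Finset (Finset V))
    (hcard : ∀ e ∈ E, e.card ≤ Fintype.card α) (hodd : ¬ HasOddCycle E) :
    ∃ c : V → α, ∀ e ∈ E, Set.InjOn c (e : Set V) := by
  classical
  obtain ⟨c, hmax⟩ := exists_incidentColorCount_max (α := α) E
  refine ⟨c, fun e he => ?_⟩
  by_contra hc
  obtain ⟨c', hlt⟩ := exists_incidentColorCount_lt hodd he (hcard e he) hc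
  exact (hmax c').not_gt hlt

/-- Every `r`-uniform hypergraph without odd cycles admits a strong vertex
coloring with `r` colors: a coloring of the vertices with `r` colors in which
no edge contains two vertices of the same color. -/
theorem stmt17 {V : Type*} [Fintype V] [DecidableEq V] (r : ℕ) (hr : 0 < r)
    (E : Finset (Finset V)) (hunif : ∀ e ∈ E, e.card = r)
    (hodd : ¬ HasOddCycle E) :
    ∃ c : V → Fin r, ∀ e ∈ E, Set.InjOn c (e : Set V) := by
  have : Nonempty (Fin r) := ⟨⟨0, hr⟩⟩
  exact stmt17_general E (fun e he => by rw [hunif e he, Fintype.card_fin]) hodd
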